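/- Iterated syzygies preserve stable degeneration: let A be a finite-dimensional k-algebra and let X, Y be finitely generated left A-modules with X ≤_st Y. Let (X_i)_{i≥0} and (Y_i)_{i≥0} be syzygy sequences for X and Y respectively. Then for every natural number j, X_j ≤_st Y_j. -/

import Mathlib

universe u

/-- `DegLE A M N` : `M ≤_deg N`, i.e. there exist a finitely generated `A`-module `Z`
and a short exact sequence `0 → N → M ⊕ Z → Z → 0`. -/
def DegLE (A : Type u) [Ring A] (M : Type u) [AddCommGroup M] [Module A M]
    (N : Type u) [AddCommGroup N] [Module A N] : Prop :=
  ∃ (Z : Type u) (_ : AddCommGroup Z) (_ : Module A Z), Module.Finite A Z ∧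
    ∃ (f : N →ₗ[A] M × Z) (g : M × Z →ₗ[A] Z),
      Function.Injective f ∧ Function.Surjective g ∧ LinearMap.range f = LinearMap.ker g

/-- `StDegLE A X Y` : `X ≤_st Y`, i.e. there exist finitely generated projective
`A`-modules `P` and `Q` with `X ⊕ P ≤_deg Y ⊕ Q`. -/
def StDegLE (A : Type u) [Ring A] (X : Type u) [AddCommGroup X] [Module A X]
    (Y : Type u) [AddCommGroup Y] [Module A Y] : Prop :=
  ∃ (P : Type u) (_ : AddCommGroup P) (_ : Module A P)
    (Q : Type u) (_ : AddCommGroup Q) (_ : Module A Q),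
    Module.Finite A P ∧ Module.Projective A P ∧
    Module.Finite A Q ∧ Module.Projective A Q ∧
    DegLE A (X × P) (Y × Q)

/-- A syzygy sequence for `Xs 0`: for each `i` there is a short exact sequence
`0 → Xs (i+1) → P → Xs i → 0` with `P` finitely generated projective. -/
def IsSyzygySeq (A : Type u) [Ring A] (Xs : ℕ → Type u)
    [∀ i, AddCommGroup (Xs i)] [∀ i, Module A (Xs i)] : Prop :=
  ∀ i, ∃ (P : Type u) (_ : AddCommGroup P) (_ : Module A P),
    Module.Finite A P ∧ Module.Projective A P ∧
    ∃ (f : Xs (i + 1) →ₗ[A] P) (g : P →ₗ[A] Xs i),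
      Function.Injective f ∧ Function.Surjective g ∧ LinearMap.range f = LinearMap.ker g

/-- Schanuel's lemma, in explicit form. -/
theorem schanuel_aux {A : Type u} [Ring A] {P Q M : Type u}
    [AddCommGroup P] [Module A P] [AddCommGroup Q] [Module A Q] [AddCommGroup M] [Module A M]
    [Module.Projective A P] [Module.Projective A Q]
    (p : P →ₗ[A] M) (q : Q →ₗ[A] M) (hp : Function.Surjective p) (hq : Function.Surjective q) :
    Nonempty ((LinearMap.ker p × Q) ≃ₗ[A] (LinearMap.ker q × P)) := by
  obtain ⟨l, hl⟩ := Module.projective_lifting_property p q hp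
  obtain ⟨m, hm⟩ := Module.projective_lifting_property q p hq
  have hl' : ∀ y, p (l y) = q y := fun y => LinearMap.congr_fun hl y
  have hm' : ∀ y, q (m y) = p y := fun y => LinearMap.congr_fun hm y
  let w : (LinearMap.ker p × Q) →ₗ[A] P :=
    (LinearMap.ker p).subtype ∘ₗ LinearMap.fst A _ _ + l ∘ₗ LinearMap.snd A _ _
  let y : (LinearMap.ker q × P) →ₗ[A] Q :=
    (LinearMap.ker q).subtype ∘ₗ LinearMap.fst A _ _ + m ∘ₗ LinearMap.snd A _ _
  have hw : ∀ t, w t = (t.1 : P) + l t.2 := fun t => rfl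
  have hy : ∀ t, y t = (t.1 : Q) + m t.2 := fun t => rfl
  let F : (LinearMap.ker p × Q) →ₗ[A] (LinearMap.ker q × P) :=
    ((LinearMap.snd A _ _ - m ∘ₗ w).codRestrict (LinearMap.ker q) (by
      intro t
      have := LinearMap.mem_ker.1 t.1.2
      simp [hw, hm', hl', this])).prod w
  let G : (LinearMap.ker q × P) →ₗ[A] (LinearMap.ker p × Q) :=
    ((LinearMap.snd A _ _ - l ∘ₗ y).codRestrict (LinearMap.ker p) (by
      intro t
      have := LinearMap.mem_ker.1 t.1.2
      simp [hy, hm', hl', this])).prod y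
  have hF1 : ∀ t, ((F t).1 : Q) = t.2 - m (w t) := fun t => rfl
  have hF2 : ∀ t, (F t).2 = w t := fun t => rfl
  have hG1 : ∀ t, ((G t).1 : P) = t.2 - l (y t) := fun t => rfl
  have hG2 : ∀ t, (G t).2 = y t := fun t => rfl
  refine ⟨LinearEquiv.ofLinearMap F G ?_ ?_⟩
  · refine LinearMap.ext fun t => Prod.ext (Subtype.ext ?_) ?_
    · simp [hF1, hG1, hG2, hw, hy]
    · simp [hF2, hG1, hG2, hw]
  · refine LinearMap.ext fun t => Prod.ext (Subtype.ext ?_) ?_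
    · simp [hF1, hF2, hG1, hw, hy]
    · simp [hF1, hF2, hG2, hy]

theorem syzygy_step {A : Type u} [Ring A] [IsNoetherianRing A]
    {X Y X1 Y1 PX PY : Type u}
    [AddCommGroup X] [Module A X] [AddCommGroup Y] [Module A Y]
    [AddCommGroup X1] [Module A X1] [AddCommGroup Y1] [Module A Y1]
    [AddCommGroup PX] [Module A PX] [AddCommGroup PY] [Module A PY]
    [Module.Finite A PX] [Module.Projective A PX] [Module.Finite A PY] [Module.Projective A PY]
    (iX : X1 →ₗ[A] PX) (pX : PX →ₗ[A] X) (hiX : Function.Injective iX)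
    (hpX : Function.Surjective pX) (hX : LinearMap.range iX = LinearMap.ker pX)
    (iY : Y1 →ₗ[A] PY) (pY : PY →ₗ[A] Y) (hiY : Function.Injective iY)
    (hpY : Function.Surjective pY) (hY : LinearMap.range iY = LinearMap.ker pY)
    (h : StDegLE A X Y) : StDegLE A X1 Y1 := by
  obtain ⟨P, _, _, Q, _, _, hPf, hPp, hQf, hQp, Z, _, _, hZ, f, g, hf, hg, hfg⟩ := h
  obtain ⟨n, pZ, hpZ⟩ := Module.Finite.exists_fin' A Z
  obtain ⟨s, hs⟩ := Module.projective_lifting_property g pZ hg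
  have hs' : ∀ b, g (s b) = pZ b := fun b => LinearMap.congr_fun hs b
  have hgf : ∀ y, g (f y) = 0 := fun y =>
    LinearMap.mem_ker.1 (hfg ▸ LinearMap.mem_range_self f y)
  -- cover of `Y × Q`
  let pN : (PY × Q) →ₗ[A] (Y × Q) := pY.prodMap LinearMap.id
  have hpN : Function.Surjective pN := hpY.prodMap Function.surjective_id
  -- horseshoe cover of the middle term
  let c : ((PY × Q) × (Fin n → A)) →ₗ[A] ((X × P) × Z) := (f ∘ₗ pN).coprod s
  have hc' : ∀ t, c t = f (pN t.1) + s t.2 := fun t => rfl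
  have hgc : ∀ t, g (c t) = pZ t.2 := fun t => by rw [hc', map_add, hgf, hs', zero_add]
  have hlift : ∀ v, g v = 0 → ∃ a, f (pN a) = v := by
    intro v hv
    have : v ∈ LinearMap.range f := hfg ▸ LinearMap.mem_ker.2 hv
    obtain ⟨y, rfl⟩ := this
    obtain ⟨a, rfl⟩ := hpN y
    exact ⟨a, rfl⟩
  have hc : Function.Surjective c := by
    intro v
    obtain ⟨b, hb⟩ := hpZ (g v)
    obtain ⟨a, ha⟩ := hlift (v - s b) (by rw [map_sub, hs', hb, sub_self])
    exact ⟨(a, b), by rw [hc', ha]; simp⟩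
  -- the direct sum cover of the middle term
  let q : ((PX × P) × (Fin n → A)) →ₗ[A] ((X × P) × Z) :=
    (pX.prodMap LinearMap.id).prodMap pZ
  have hq : Function.Surjective q := (hpX.prodMap Function.surjective_id).prodMap hpZ
  obtain ⟨e⟩ := schanuel_aux c q hc hq
  -- kernel of `q`
  let j : (X1 × LinearMap.ker pZ) →ₗ[A] ((PX × P) × (Fin n → A)) :=
    ((LinearMap.inl A PX P) ∘ₗ iX).prodMap (LinearMap.ker pZ).subtype
  have hj : Function.Injective j :=
    (LinearMap.inl_injective.comp hiX).prodMap Subtype.val_injective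
  have hjr : LinearMap.range j = LinearMap.ker q := by
    ext ⟨⟨a, b⟩, z⟩
    have h1 : a ∈ LinearMap.range iX ↔ a ∈ LinearMap.ker pX := by rw [hX]
    simp only [LinearMap.mem_range, LinearMap.mem_ker] at h1
    constructor
    · rintro ⟨⟨x, w⟩, hxw⟩
      simp only [j, LinearMap.prodMap_apply, LinearMap.comp_apply, LinearMap.inl_apply,
        Submodule.subtype_apply, Prod.mk.injEq] at hxw
      obtain ⟨⟨hx, hb⟩, hw⟩ := hxw
      have := h1.1 ⟨x, hx⟩
      have hz : pZ z = 0 := hw ▸ w.2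
      simp [q, this, ← hb, hz]
    · intro hk
      simp only [q, LinearMap.mem_ker, LinearMap.prodMap_apply, LinearMap.id_apply,
        Prod.mk_eq_zero] at hk
      obtain ⟨⟨hx, hb⟩, hz⟩ := hk
      obtain ⟨x, hx⟩ := h1.2 hx
      exact ⟨(x, ⟨z, hz⟩), by simp [j, hx, hb]⟩
  let eK : (X1 × LinearMap.ker pZ) ≃ₗ[A] LinearMap.ker q :=
    (LinearEquiv.ofInjective j hj).trans (LinearEquiv.ofEq _ _ hjr)
  -- the exact sequence `0 → Y1 → ker c → ker pZ → 0`
  have hiY0 : ∀ y, pY (iY y) = 0 := fun y =>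
    LinearMap.mem_ker.1 (hY ▸ LinearMap.mem_range_self iY y)
  let i : Y1 →ₗ[A] LinearMap.ker c :=
    (LinearMap.inl A (PY × Q) (Fin n → A) ∘ₗ LinearMap.inl A PY Q ∘ₗ iY).codRestrict _ (by
      intro y
      rw [LinearMap.mem_ker, hc']
      simp [pN, hiY0]
      exact map_zero f)
  have hi' : ∀ y, (i y : (PY × Q) × (Fin n → A)) = ((iY y, 0), 0) := fun y => rfl
  let r : LinearMap.ker c →ₗ[A] LinearMap.ker pZ :=
    (LinearMap.snd A (PY × Q) (Fin n → A) ∘ₗ (LinearMap.ker c).subtype).codRestrict _ (by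
      intro t
      have := hgc t
      rw [LinearMap.mem_ker.1 t.2, map_zero] at this
      exact this.symm)
  have hr' : ∀ t, (r t : Fin n → A) = (t : (PY × Q) × (Fin n → A)).2 := fun t => rfl
  have hi : Function.Injective i := by
    intro a b hab
    have := congrArg Subtype.val hab
    rw [hi', hi'] at this
    exact hiY (congrArg (fun t => t.1.1) this)
  have hr : Function.Surjective r := by
    rintro ⟨b, hb⟩
    obtain ⟨a, ha⟩ := hlift (- s b) (by rw [map_neg, hs', LinearMap.mem_ker.1 hb, neg_zero])
    exact ⟨⟨(a, b), by rw [LinearMap.mem_ker, hc', ha]; simp⟩, rfl⟩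
  have hri : ∀ t, r t = 0 ↔ ∃ y, i y = t := by
    intro t
    constructor
    · intro ht
      obtain ⟨⟨⟨a, b⟩, z⟩, ht'⟩ := t
      have hz : z = 0 := congrArg Subtype.val ht
      subst hz
      rw [LinearMap.mem_ker, hc'] at ht'
      simp only [map_zero, add_zero] at ht'
      have h0 := hf (ht'.trans (map_zero f).symm)
      simp only [pN, LinearMap.prodMap_apply, LinearMap.id_apply, Prod.mk_eq_zero] at h0
      have : a ∈ LinearMap.range iY := hY ▸ LinearMap.mem_ker.2 h0.1
      obtain ⟨y, rfl⟩ := this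
      exact ⟨y, Subtype.ext (by rw [hi']; exact Prod.ext (Prod.ext rfl h0.2.symm) rfl)⟩
    · rintro ⟨y, rfl⟩
      exact Subtype.ext (by rw [hr', hi']; rfl)
  -- assemble
  let R := (PX × P) × (Fin n → A)
  let S := (PY × Q) × (Fin n → A)
  let E : (LinearMap.ker c × R) ≃ₗ[A] ((X1 × S) × LinearMap.ker pZ) :=
    e.trans ((eK.symm.prodCongr (LinearEquiv.refl A S)).trans
        ((LinearEquiv.prodAssoc A X1 (LinearMap.ker pZ) S).trans
          (((LinearEquiv.refl A X1).prodCongr (LinearEquiv.prodComm A (LinearMap.ker pZ) S)).trans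
            (LinearEquiv.prodAssoc A X1 S (LinearMap.ker pZ)).symm)))
  refine ⟨S, inferInstance, inferInstance, R, inferInstance, inferInstance,
    inferInstance, inferInstance, inferInstance, inferInstance,
    LinearMap.ker pZ, inferInstance, inferInstance, inferInstance,
    E.toLinearMap ∘ₗ i.prodMap LinearMap.id,
    r ∘ₗ LinearMap.fst A _ _ ∘ₗ E.symm.toLinearMap, ?_, ?_, ?_⟩
  · exact E.injective.comp (hi.prodMap Function.injective_id)
  · exact hr.comp (Prod.fst_surjective.comp E.symm.surjective)
  · ext v
    obtain ⟨⟨t, w⟩, rfl⟩ := E.surjective v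
    simp only [LinearMap.mem_range, LinearMap.mem_ker, LinearMap.comp_apply,
      LinearEquiv.coe_coe, LinearEquiv.symm_apply_apply, LinearMap.fst_apply, hri,
      E.injective.eq_iff, LinearMap.prodMap_apply, LinearMap.id_apply, Prod.mk.injEq]
    constructor
    · rintro ⟨y, hy, -⟩
      exact ⟨y.1, hy⟩
    · rintro ⟨y, hy⟩
      exact ⟨(y, w), hy, rfl⟩

/-- Iterated syzygies preserve stable degeneration. -/
theorem iterated_syzygy_preserves_stable_degeneration
    (k : Type u) [Field k] (A : Type u) [Ring A] [Algebra k A] [FiniteDimensional k A]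
    (Xs : ℕ → Type u) [∀ i, AddCommGroup (Xs i)] [∀ i, Module A (Xs i)]
    [∀ i, Module.Finite A (Xs i)]
    (Ys : ℕ → Type u) [∀ i, AddCommGroup (Ys i)] [∀ i, Module A (Ys i)]
    [∀ i, Module.Finite A (Ys i)]
    (hXs : IsSyzygySeq A Xs) (hYs : IsSyzygySeq A Ys)
    (h : StDegLE A (Xs 0) (Ys 0)) :
    ∀ j : ℕ, StDegLE A (Xs j) (Ys j) := by
  have : IsNoetherianRing A := isNoetherian_of_tower k (inferInstance : IsNoetherian k A)
  intro j
  induction j with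
  | zero => exact h
  | succ j ih =>
    obtain ⟨PX, _, _, _, _, iX, pX, h1, h2, h3⟩ := hXs j
    obtain ⟨PY, _, _, _, _, iY, pY, h4, h5, h6⟩ := hYs j
    exact syzygy_step iX pX h1 h2 h3 iY pY h4 h5 h6 ih
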